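/- arXiv:2401.08385 — 3 statements merged into one kernel-verified Lean document; each statement's English description precedes it below -/
import Mathlib

section
/- (Relational Recursion, Theorem 2.) Let ψ be a procedure environment and Φ a relational contract environment. Assume: (i) for every procedure environment ψ', if ψ' ⊨ Φ then for every nonempty sequence of procedure names (y_k)_{k=1}^n, the relational Hoare triple ψ' ⊨ {pre_Φ((y_k))} (ψ(y_k))_{k=1}^n {post_Φ((y_k))} holds (i.e., the sequence of bodies taken from ψ satisfies the relational contract when executed under ψ'); and (ii) if ψ ⊨ Φ then ψ ⊨ {P} (c_k)_{k=1}^n {Q}. Then ψ ⊨ {P} (c_k)_{k=1}^n {Q}. -/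
/-- Memory states: location `x_i` holds value `σ i`. -/
abbrev Mem : Type := ℕ → ℕ

/-- Update `σ[i/n]`: maps `i` to `n` and agrees with `σ` elsewhere. -/
def Mem.update (σ : Mem) (i n : ℕ) : Mem := fun j => if j = i then n else σ j

inductive Aop : Type
  | add | mul | sub

def Aop.eval : Aop → ℕ → ℕ → ℕ
  | .add => fun m n => m + n
  | .mul => fun m n => m * n
  | .sub => fun m n => m - n

/-- Arithmetic expressions. -/
inductive Aexp : Type
  | const : ℕ → Aexp
  | loc : ℕ → Aexp
  | deref : ℕ → Aexp
  | addr : ℕ → Aexp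
  | binop : Aop → Aexp → Aexp → Aexp

def Aexp.eval : Aexp → Mem → ℕ
  | .const n, _ => n
  | .loc i, σ => σ i
  | .deref i, σ => σ (σ i)
  | .addr i, _ => i
  | .binop o a1 a2, σ => o.eval (a1.eval σ) (a2.eval σ)

inductive Bcmp : Type
  | le | lt | eq

def Bcmp.eval : Bcmp → ℕ → ℕ → Bool
  | .le => fun m n => decide (m ≤ n)
  | .lt => fun m n => decide (m < n)
  | .eq => fun m n => decide (m = n)

/-- Boolean expressions. -/
inductive Bexp : Type
  | tt : Bexp
  | ff : Bexp
  | cmp : Bcmp → Aexp → Aexp → Bexp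
  | and : Bexp → Bexp → Bexp
  | or : Bexp → Bexp → Bexp
  | not : Bexp → Bexp

def Bexp.eval : Bexp → Mem → Bool
  | .tt, _ => true
  | .ff, _ => false
  | .cmp o a1 a2, σ => o.eval (a1.eval σ) (a2.eval σ)
  | .and b1 b2, σ => b1.eval σ && b2.eval σ
  | .or b1 b2, σ => b1.eval σ || b2.eval σ
  | .not b, σ => !(b.eval σ)

/-- Commands, over a type `Y` of procedure names. -/
inductive Com (Y : Type) : Type
  | skip : Com Y
  | assign : ℕ → Aexp → Com Y                      -- x_i := a
  | store : ℕ → Aexp → Com Y                       -- *x_i := a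
  | seq : Com Y → Com Y → Com Y
  | assert : (Mem → Prop) → Com Y
  | cond : Bexp → Com Y → Com Y → Com Y
  | while : Bexp → (Mem → Prop) → Com Y → Com Y
  | call : Y → Com Y

/-- Big-step operational semantics `⟨c, σ⟩ →_ψ σ'`. -/
inductive BigStep {Y : Type} (ψ : Y → Com Y) : Com Y → Mem → Mem → Prop
  | skip (σ : Mem) : BigStep ψ .skip σ σ
  | assign (i : ℕ) (a : Aexp) (σ : Mem) :
      BigStep ψ (.assign i a) σ (σ.update i (a.eval σ))
  | store (i : ℕ) (a : Aexp) (σ : Mem) :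
      BigStep ψ (.store i a) σ (σ.update (σ i) (a.eval σ))
  | seq {c1 c2 : Com Y} {σ σ'' σ' : Mem} :
      BigStep ψ c1 σ σ'' → BigStep ψ c2 σ'' σ' → BigStep ψ (.seq c1 c2) σ σ'
  | assert (P : Mem → Prop) (σ : Mem) : BigStep ψ (.assert P) σ σ
  | condTrue {b : Bexp} {c1 c2 : Com Y} {σ σ' : Mem} :
      b.eval σ = true → BigStep ψ c1 σ σ' → BigStep ψ (.cond b c1 c2) σ σ'
  | condFalse {b : Bexp} {c1 c2 : Com Y} {σ σ' : Mem} :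
      b.eval σ = false → BigStep ψ c2 σ σ' → BigStep ψ (.cond b c1 c2) σ σ'
  | whileTrue {b : Bexp} {I : Mem → Prop} {c : Com Y} {σ σ'' σ' : Mem} :
      b.eval σ = true → BigStep ψ c σ σ'' → BigStep ψ (.while b I c) σ'' σ' →
      BigStep ψ (.while b I c) σ σ'
  | whileFalse {b : Bexp} {I : Mem → Prop} {c : Com Y} {σ : Mem} :
      b.eval σ = false → BigStep ψ (.while b I c) σ σ
  | call {y : Y} {σ σ' : Mem} : BigStep ψ (ψ y) σ σ' → BigStep ψ (.call y) σ σ'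

/-- Hoare triple `ψ ⊨ {P} c {Q}`. -/
def HoareTriple {Y : Type} (ψ : Y → Com Y) (P : Mem → Prop) (c : Com Y)
    (Q : Mem → Mem → Prop) : Prop :=
  ∀ σ σ' : Mem, P σ → BigStep ψ c σ σ' → Q σ σ'

/-- A contract: a precondition and a postcondition. -/
abbrev Contract : Type := (Mem → Prop) × (Mem → Mem → Prop)

/-- Contract validity `ψ ⊨ φ`. -/
def ContractValid {Y : Type} (ψ : Y → Com Y) (φ : Y → Contract) : Prop :=
  ∀ y : Y, HoareTriple ψ (φ y).1 (.call y) (φ y).2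

/-- Pointwise big-step execution of a sequence of commands. -/
inductive BigSteps {Y : Type} (ψ : Y → Com Y) : List (Com Y) → List Mem → List Mem → Prop
  | nil : BigSteps ψ [] [] []
  | cons {c : Com Y} {cs : List (Com Y)} {σ σ' : Mem} {σs σs' : List Mem} :
      BigStep ψ c σ σ' → BigSteps ψ cs σs σs' →
      BigSteps ψ (c :: cs) (σ :: σs) (σ' :: σs')

/-- Relational Hoare triple `ψ ⊨ {P} (c_k) {Q}`. -/
def RHoare {Y : Type} (ψ : Y → Com Y) (P : List Mem → Prop) (cs : List (Com Y))
    (Q : List Mem → List Mem → Prop) : Prop :=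
  ∀ σs σs' : List Mem, P σs → BigSteps ψ cs σs σs' → Q σs σs'

/-- A relational contract: a relational precondition and postcondition. -/
abbrev RContract : Type := (List Mem → Prop) × (List Mem → List Mem → Prop)

/-- Relational contract validity `ψ ⊨ Φ`. -/
def RContractValid {Y : Type} (ψ : Y → Com Y) (Φ : List Y → RContract) : Prop :=
  ∀ ys : List Y, ys ≠ [] → RHoare ψ (Φ ys).1 (ys.map Com.call) (Φ ys).2

/-- Optimized main VC function `Tc`. -/
def Tc {Y : Type} : Com Y → Mem → Mem → (Y → Contract) → (Prop → Prop) → Prop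
  | .skip, σ, σ', _, f => f (σ = σ')
  | .assign i a, σ, σ', _, f => f (σ' = σ.update i (a.eval σ))
  | .store i a, σ, σ', _, f => f (σ' = σ.update (σ i) (a.eval σ))
  | .assert P', σ, σ', _, f => f (P' σ ∧ σ = σ')
  | .seq c0 c1, σ, σ', φ, f =>
      ∀ σ'' : Mem, Tc c0 σ σ'' φ (fun p1 => Tc c1 σ'' σ' φ (fun p2 => f (p1 ∧ p2)))
  | .cond b c0 c1, σ, σ', φ, f =>
      Tc c0 σ σ' φ (fun p1 => Tc c1 σ σ' φ (fun p2 =>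
        f ((b.eval σ = true → p1) ∧ (b.eval σ = false → p2))))
  | .call y, σ, σ', φ, f => f ((φ y).1 σ ∧ (φ y).2 σ σ')
  | .while b I _, σ, σ', _, f => f (I σ ∧ I σ' ∧ b.eval σ' = false)

/-- Optimized auxiliary VC function `Ta`. -/
def Ta {Y : Type} : Com Y → Mem → (Y → Contract) → Prop
  | .skip, _, _ => True
  | .assign _ _, _, _ => True
  | .store _ _, _, _ => True
  | .assert P', σ, _ => P' σ
  | .seq c0 c1, σ, φ =>
      Ta c0 σ φ ∧ ∀ σ' : Mem, Tc c0 σ σ' φ (fun p => p → Ta c1 σ' φ)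
  | .cond b c0 c1, σ, φ =>
      (b.eval σ = true → Ta c0 σ φ) ∧ (b.eval σ = false → Ta c1 σ φ)
  | .call y, σ, φ => (φ y).1 σ
  | .while b I c, σ, φ =>
      I σ ∧ (∀ σ' : Mem, I σ' → b.eval σ' = true → Ta c σ' φ) ∧
      (∀ σ' σ'' : Mem, I σ' → Tc c σ' σ'' φ (fun p => p → I σ''))

/-- Optimized procedure VC `Tf`. -/
def Tf {Y : Type} (φ : Y → Contract) (ψ : Y → Com Y) : Prop :=
  ∀ (y : Y) (σ σ' : Mem), (φ y).1 σ →
    Ta (ψ y) σ φ ∧ Tc (ψ y) σ σ' φ (fun p => p → (φ y).2 σ σ')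

/-- Naive main VC function `Tcⁿ`. -/
def Tcn {Y : Type} : Com Y → Mem → (Y → Contract) → (Mem → Prop) → Prop
  | .skip, σ, _, P => P σ
  | .assign i a, σ, _, P => P (σ.update i (a.eval σ))
  | .store i a, σ, _, P => P (σ.update (σ i) (a.eval σ))
  | .assert P', σ, _, P => P' σ → P σ
  | .seq c0 c1, σ, φ, P => Tcn c0 σ φ (fun σ'' => Tcn c1 σ'' φ P)
  | .cond b c0 c1, σ, φ, P =>
      (b.eval σ = true → Tcn c0 σ φ P) ∧ (b.eval σ = false → Tcn c1 σ φ P)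
  | .call y, σ, φ, P => ∀ σ' : Mem, (φ y).1 σ ∧ (φ y).2 σ σ' → P σ'
  | .while b I _, σ, _, P => ∀ σ' : Mem, I σ ∧ I σ' ∧ b.eval σ' = false → P σ'

/-- Naive auxiliary VC function `Taⁿ`. -/
def Tan {Y : Type} : Com Y → Mem → (Y → Contract) → Prop
  | .skip, _, _ => True
  | .assign _ _, _, _ => True
  | .store _ _, _, _ => True
  | .assert P', σ, _ => P' σ
  | .seq c0 c1, σ, φ => Tan c0 σ φ ∧ Tcn c0 σ φ (fun σ' => Tan c1 σ' φ)
  | .cond b c0 c1, σ, φ =>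
      (b.eval σ = true → Tan c0 σ φ) ∧ (b.eval σ = false → Tan c1 σ φ)
  | .call y, σ, φ => (φ y).1 σ
  | .while b I c, σ, φ =>
      I σ ∧ (∀ σ' : Mem, I σ' → b.eval σ' = true → Tan c σ' φ ∧ Tcn c σ' φ I)

/-- Naive procedure VC `Tfⁿ`. -/
def Tfn {Y : Type} (φ : Y → Contract) (ψ : Y → Com Y) : Prop :=
  ∀ (y : Y) (σ : Mem), (φ y).1 σ →
    Tan (ψ y) σ φ ∧ Tcn (ψ y) σ φ (fun σ' => (φ y).2 σ σ')

/-- Relational VC function `Tr` (recursion over the sequence of commands). -/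
def Tr {Y : Type} : List (Com Y) → List Mem → List Mem → (Y → Contract) →
    (Prop → Prop) → Prop
  | [], [], [], _, f => f True
  | c :: cs, σ :: σs, σ' :: σs', φ, f =>
      Tc c σ σ' φ (fun pn => Tr cs σs σs' φ (fun pm => f (pn ∧ pm)))
  | _, _, _, _, _ => True

/-- Relational auxiliary VC function `Ta_r`. -/
def Tar {Y : Type} : List (Com Y) → List Mem → (Y → Contract) → Prop
  | [], [], _ => True
  | c :: cs, σ :: σs, φ => Ta c σ φ ∧ Tar cs σs φ
  | _, _, _ => True

/-- `Proccall(y, σ, σ', ψ)`. -/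
def Proccall {Y : Type} (y : Y) (σ σ' : Mem) (ψ : Y → Com Y) : Prop :=
  BigStep ψ (.call y) σ σ'

/-- `Procpred`: all the calls of the sequence have taken place. -/
def Procpred {Y : Type} (ψ : Y → Com Y) : List Y → List Mem → List Mem → Prop
  | [], [], [] => True
  | y :: ys, σ :: σs, σ' :: σs' => Proccall y σ σ' ψ ∧ Procpred ψ ys σs σs'
  | _, _, _ => False

/-- `Tpr`: translation of the relational contracts into a logical formula. -/
def Tpr {Y : Type} (Φ : List Y → RContract) (ψ : Y → Com Y) : Prop :=
  ∀ (ys : List Y) (σs σs' : List Mem), ys ≠ [] →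
    Procpred ψ ys σs σs' → (Φ ys).1 σs → (Φ ys).2 σs σs'

/-- `Φcall`: reduce singleton relational contracts to standard contracts with
tracked calls. -/
def Phicall {Y : Type} (Φ : List Y → RContract) (ψ : Y → Com Y) : Y → Contract :=
  fun y =>
    (fun σ => (Φ [y]).1 [σ],
     fun σ σ' => (Φ [y]).2 [σ] [σ'] ∧ Proccall y σ σ' ψ)

/-- Relational procedure VC `Tf_r`. -/
def Tfr {Y : Type} (Φ : List Y → RContract) (ψ : Y → Com Y) : Prop :=
  ∀ (ys : List Y) (σs σs' : List Mem) (ψ' : Y → Com Y),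
    (Φ ys).1 σs → Tpr Φ ψ' →
    Tar (ys.map ψ) σs (Phicall Φ ψ') ∧
    Tr (ys.map ψ) σs σs' (Phicall Φ ψ')
      (fun p => p → (Φ ys).2 σs σs')

/-- The recursive summation command `c_sum`. -/
def csum : Com Unit :=
  .cond (.cmp .lt (.loc 1) (.loc 2))
    (.seq (.assign 3 (.binop .add (.loc 3) (.loc 1)))
      (.seq (.assign 1 (.binop .add (.loc 1) (.const 1)))
        (.call ())))
    .skip

/-- The procedure environment binding `y_sum` to `c_sum`. -/
def psum : Unit → Com Unit := fun _ => csum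

/-!
Hypothesis (i) only speaks about actual procedure environments, so call depth is bounded
syntactically: the `k`-th unrolling of `ψ` inlines calls to depth `k` and diverges beyond that.
Calling `y` in unrolling `k + 1` amounts to running the body `ψ y` in unrolling `k`, so (i) carries
the validity of `Φ` from each unrolling to the next, starting from unrolling `0`, where no call
terminates. An execution under `ψ` has finite call depth, hence is also an execution under all
sufficiently deep unrollings, and the validity of `Φ` passes to `ψ`.
-/

open Filter

section

variable {Y Z W : Type}

namespace Com

/-- Simultaneous substitution: every call to a procedure `y` is replaced by the command `θ y`. -/
def bind (θ : Y → Com Z) : Com Y → Com Z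
  | .skip => .skip
  | .assign i a => .assign i a
  | .store i a => .store i a
  | .seq c₁ c₂ => .seq (c₁.bind θ) (c₂.bind θ)
  | .assert P => .assert P
  | .cond b c₁ c₂ => .cond b (c₁.bind θ) (c₂.bind θ)
  | .while b I c => .while b I (c.bind θ)
  | .call y => θ y

theorem bind_call (c : Com Y) : c.bind call = c := by
  induction c <;> simp_all only [bind]

end Com

/-- The `k`-th unrolling of the procedure environment `ψ`: bodies are inlined to call depth `k`,
deeper calls being replaced by an infinite loop. The resulting bodies contain no calls. -/
def unroll (ψ : Y → Com Y) : ℕ → Y → Com Y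
  | 0, _ => .while .tt (fun _ => True) .skip
  | k + 1, y => (ψ y).bind (unroll ψ k)

namespace BigStep

variable {χ : Z → Com Z} {ω : W → Com W}

theorem call_eq (ψ : Y → Com Y) (y : Y) : BigStep ψ (.call y) = BigStep ψ (ψ y) :=
  le_antisymm (fun | _, _, .call h => h) fun _ _ => .call

theorem while_tt_eq_bot (I : Mem → Prop) (c : Com Z) : BigStep χ (.while .tt I c) = ⊥ := by
  refine eq_bot_iff.mpr fun σ σ' h => ?_
  generalize hd : Com.while .tt I c = d at h
  induction h with
  | whileTrue _ _ _ _ ih => exact ih hd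
  | whileFalse hb => cases hd; cases hb
  | _ => cases hd

theorem while_mono {c : Com Z} {d : Com W} (h : BigStep χ c ≤ BigStep ω d) (b : Bexp)
    (I J : Mem → Prop) : BigStep χ (.while b I c) ≤ BigStep ω (.while b J d) := by
  intro σ σ' hw
  generalize he : Com.while b I c = e at hw
  induction hw with
  | whileTrue hb hc _ _ ih => cases he; exact .whileTrue hb (h _ _ hc) (ih rfl)
  | whileFalse hb => cases he; exact .whileFalse hb
  | _ => cases he

theorem bind_mono {θ : Y → Com Z} {η : Y → Com W} (h : ∀ y, BigStep χ (θ y) ≤ BigStep ω (η y)) :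
    ∀ c : Com Y, BigStep χ (c.bind θ) ≤ BigStep ω (c.bind η)
  | .skip => fun | _, _, .skip _ => .skip _
  | .assign _ _ => fun | _, _, .assign _ _ _ => .assign _ _ _
  | .store _ _ => fun | _, _, .store _ _ _ => .store _ _ _
  | .seq c₁ c₂ => fun
    | _, _, .seq h₁ h₂ => .seq (bind_mono h c₁ _ _ h₁) (bind_mono h c₂ _ _ h₂)
  | .assert _ => fun | _, _, .assert _ _ => .assert _ _
  | .cond _ c₁ c₂ => fun
    | _, _, .condTrue hb h₁ => .condTrue hb (bind_mono h c₁ _ _ h₁)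
    | _, _, .condFalse hb h₂ => .condFalse hb (bind_mono h c₂ _ _ h₂)
  | .while b I c => while_mono (bind_mono h c) b I I
  | .call y => h y

theorem bind_congr {θ : Y → Com Z} {η : Y → Com W} (h : ∀ y, BigStep χ (θ y) = BigStep ω (η y))
    (c : Com Y) : BigStep χ (c.bind θ) = BigStep ω (c.bind η) :=
  le_antisymm (bind_mono (fun y => (h y).le) c) (bind_mono (fun y => (h y).ge) c)

theorem unroll_env_irrel (ψ χ ω : Y → Com Y) (k : ℕ) (y : Y) :
    BigStep χ (unroll ψ k y) = BigStep ω (unroll ψ k y) := by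
  induction k generalizing y with
  | zero => exact (while_tt_eq_bot _ _).trans (while_tt_eq_bot _ _).symm
  | succ k ih => exact bind_congr ih (ψ y)

theorem bind_unroll (ψ χ : Y → Com Y) (k : ℕ) (c : Com Y) :
    BigStep χ (c.bind (unroll ψ k)) = BigStep (unroll ψ k) c := by
  have inline_call (y : Y) : BigStep χ (unroll ψ k y) = BigStep (unroll ψ k) (.call y) :=
    (unroll_env_irrel ψ χ _ k y).trans (call_eq _ y).symm
  simpa only [Com.bind_call] using bind_congr inline_call c

theorem unroll_zero_call (ψ : Y → Com Y) (y : Y) : BigStep (unroll ψ 0) (.call y) = ⊥ :=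
  (call_eq _ y).trans (while_tt_eq_bot _ _)

theorem unroll_succ_call (ψ : Y → Com Y) (k : ℕ) (y : Y) :
    BigStep (unroll ψ (k + 1)) (.call y) = BigStep (unroll ψ k) (ψ y) :=
  (call_eq _ y).trans (bind_unroll ψ _ k (ψ y))

theorem eventually_unroll {ψ : Y → Com Y} {c : Com Y} {σ σ' : Mem} (h : BigStep ψ c σ σ') :
    ∀ᶠ k in atTop, BigStep (unroll ψ k) c σ σ' := by
  induction h with
  | skip σ => exact .of_forall fun _ => .skip σ
  | assign i a σ => exact .of_forall fun _ => .assign i a σ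
  | store i a σ => exact .of_forall fun _ => .store i a σ
  | assert P σ => exact .of_forall fun _ => .assert P σ
  | seq _ _ ih₁ ih₂ => exact ih₁.mp (ih₂.mono fun _ h₂ h₁ => .seq h₁ h₂)
  | condTrue hb _ ih => exact ih.mono fun _ => .condTrue hb
  | condFalse hb _ ih => exact ih.mono fun _ => .condFalse hb
  | whileTrue hb _ _ ih₁ ih₂ => exact ih₁.mp (ih₂.mono fun _ h₂ h₁ => .whileTrue hb h₁ h₂)
  | whileFalse hb => exact .of_forall fun _ => .whileFalse hb
  | call _ ih =>
    rw [← map_add_atTop_eq_nat 1, eventually_map]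
    simpa only [unroll_succ_call] using ih

end BigStep

namespace BigSteps

theorem map_mono {ι : Type*} {χ : Z → Com Z} {ω : W → Com W} {f : ι → Com Z} {g : ι → Com W}
    (h : ∀ i, BigStep χ (f i) ≤ BigStep ω (g i)) (is : List ι) :
    BigSteps χ (is.map f) ≤ BigSteps ω (is.map g) := by
  induction is with
  | nil => exact fun | _, _, .nil => .nil
  | cons i is ih => exact fun | _, _, .cons hi his => .cons (h i _ _ hi) (ih _ _ his)

theorem eventually_unroll {ψ : Y → Com Y} {cs : List (Com Y)} {σs σs' : List Mem}
    (h : BigSteps ψ cs σs σs') : ∀ᶠ k in atTop, BigSteps (unroll ψ k) cs σs σs' := by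
  induction h with
  | nil => exact .of_forall fun _ => .nil
  | cons hc _ ih => exact hc.eventually_unroll.mp (ih.mono fun _ hcs hc => .cons hc hcs)

end BigSteps

theorem RHoare.of_unroll {ψ : Y → Com Y} {P : List Mem → Prop} {cs : List (Com Y)}
    {Q : List Mem → List Mem → Prop} (h : ∀ k, RHoare (unroll ψ k) P cs Q) : RHoare ψ P cs Q := by
  intro σs σs' hP hcs
  obtain ⟨k, hk⟩ := hcs.eventually_unroll.exists
  exact h k σs σs' hP hk

theorem RContractValid.unroll_zero (ψ : Y → Com Y) (Φ : List Y → RContract) :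
    RContractValid (unroll ψ 0) Φ := by
  rintro (_ | ⟨y, ys⟩) hys σs σs' - hcalls
  · exact absurd rfl hys
  · cases hcalls with
    | cons hy _ => exact ((BigStep.unroll_zero_call ψ y).le _ _ hy).elim

theorem RContractValid.unroll_succ {ψ : Y → Com Y} {Φ : List Y → RContract} {k : ℕ}
    (h : ∀ ys : List Y, ys ≠ [] → RHoare (unroll ψ k) (Φ ys).1 (ys.map ψ) (Φ ys).2) :
    RContractValid (unroll ψ (k + 1)) Φ := fun ys hys σs σs' hpre hcalls =>
  h ys hys σs σs' hpre
    (BigSteps.map_mono (fun y => (BigStep.unroll_succ_call ψ k y).le) ys σs σs' hcalls)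

end

/-- Theorem 2 (Relational Recursion). -/
theorem relational_recursion {Y : Type} (ψ : Y → Com Y) (Φ : List Y → RContract)
    (P : List Mem → Prop) (cs : List (Com Y)) (Q : List Mem → List Mem → Prop)
    (h1 : ∀ ψ' : Y → Com Y, RContractValid ψ' Φ →
      ∀ ys : List Y, ys ≠ [] → RHoare ψ' (Φ ys).1 (ys.map ψ) (Φ ys).2)
    (h2 : RContractValid ψ Φ → RHoare ψ P cs Q) :
    RHoare ψ P cs Q := by
  have valid_unroll (k : ℕ) : RContractValid (unroll ψ k) Φ := by
    induction k with
    | zero => exact .unroll_zero ψ Φ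
    | succ k ih => exact .unroll_succ (h1 (unroll ψ k) ih)
  exact h2 fun ys hys => .of_unroll fun k => valid_unroll k ys hys
end

section
/- (Mutual recursion for relational contracts, Coq lemma used in recursion_relational.) Let ψ be a procedure environment and Φ a relational contract environment. If for every procedure environment ψ', ψ' ⊨ Φ implies that for every nonempty sequence of procedure names (y_k)_{k=1}^n the relational Hoare triple ψ' ⊨ {pre_Φ((y_k))} (ψ(y_k))_{k=1}^n {post_Φ((y_k))} holds (i.e., the sequence of bodies taken from ψ satisfies the relational contract when executed under ψ'), then ψ ⊨ Φ. -/
/-!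
Let `ψₖ` execute calls of `ψ` up to nesting depth `k` and diverge below it. Contracts hold vacuously
under `ψ₀`, and a call under `ψₖ₊₁` is an execution under `ψₖ` of the corresponding body from `ψ`,
so the hypothesis propagates validity from `ψₖ` to `ψₖ₊₁`. A terminating execution under `ψ` has
bounded call depth, hence is an execution under all large `ψₖ`, and validity passes to `ψ`.
For `ψₖ` to be an environment of the language, its bodies are made call-free by inlining.
-/

open Filter

section

variable {Y Z W : Type}

/-- Inlining: the command `c` with every call of `y` replaced by the command `f y`. This is the
monadic bind of `Com`, so the new commands may range over other procedure names. -/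
def Com.inline (f : Y → Com Z) : Com Y → Com Z
  | .skip => .skip
  | .assign i a => .assign i a
  | .store i a => .store i a
  | .seq c d => .seq (c.inline f) (d.inline f)
  | .assert P => .assert P
  | .cond b c d => .cond b (c.inline f) (d.inline f)
  | .while b I c => .while b I (c.inline f)
  | .call y => f y

theorem Com.inline_call (c : Com Y) : c.inline Com.call = c := by
  induction c <;> simp_all only [Com.inline]

theorem bigStep_call_iff {ψ : Y → Com Y} {y : Y} {σ σ' : Mem} :
    BigStep ψ (.call y) σ σ' ↔ BigStep ψ (ψ y) σ σ' :=
  ⟨fun | .call h => h, .call⟩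

theorem BigStep.while_mono_s3 {ψ : Y → Com Y} {χ : Z → Com Z} {b : Bexp} {I J : Mem → Prop}
    {c : Com Y} {d : Com Z} {σ σ' : Mem} (hcd : ∀ τ τ', BigStep ψ c τ τ' → BigStep χ d τ τ')
    (h : BigStep ψ (.while b I c) σ σ') : BigStep χ (.while b J d) σ σ' := by
  generalize hw : Com.while b I c = w at h
  induction h with
  | whileTrue hb hbody _ _ ih =>
    cases hw
    exact .whileTrue hb (hcd _ _ hbody) (ih rfl)
  | whileFalse hb =>
    cases hw
    exact .whileFalse hb
  | _ => cases hw

theorem BigStep.eval_eq_false_of_while {ψ : Y → Com Y} {b : Bexp} {I : Mem → Prop} {c : Com Y}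
    {σ σ' : Mem} (h : BigStep ψ (.while b I c) σ σ') : b.eval σ' = false := by
  generalize hw : Com.while b I c = w at h
  induction h with
  | whileTrue _ _ _ _ ih => exact ih hw
  | whileFalse hb =>
    cases hw
    exact hb
  | _ => cases hw

theorem BigStep.inline_mono {ψ : Z → Com Z} {χ : W → Com W} {f : Y → Com Z} {g : Y → Com W}
    (hfg : ∀ y τ τ', BigStep ψ (f y) τ τ' → BigStep χ (g y) τ τ') {c : Com Y} {σ σ' : Mem}
    (h : BigStep ψ (c.inline f) σ σ') : BigStep χ (c.inline g) σ σ' := by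
  induction c generalizing σ σ' with
  | skip => cases h; exact .skip _
  | assign => cases h; exact .assign _ _ _
  | store => cases h; exact .store _ _ _
  | assert => cases h; exact .assert _ _
  | seq _ _ ih₁ ih₂ =>
    cases h with
    | seq h₁ h₂ => exact .seq (ih₁ h₁) (ih₂ h₂)
  | cond _ _ _ ih₁ ih₂ =>
    cases h with
    | condTrue hb h₁ => exact .condTrue hb (ih₁ h₁)
    | condFalse hb h₂ => exact .condFalse hb (ih₂ h₂)
  | call y => exact hfg y _ _ h
  -- The loop: `while` is reserved and cannot name an alternative.
  | _ _ _ _ ih => exact h.while_mono_s3 fun _ _ => ih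

theorem bigStep_inline_iff {ψ : Z → Com Z} {χ : Y → Com Y} {f : Y → Com Z}
    (hf : ∀ y τ τ', BigStep ψ (f y) τ τ' ↔ BigStep χ (χ y) τ τ') {c : Com Y} {σ σ' : Mem} :
    BigStep ψ (c.inline f) σ σ' ↔ BigStep χ c σ σ' := by
  simp only [← bigStep_call_iff] at hf
  constructor <;> intro h
  · simpa only [Com.inline_call] using h.inline_mono fun y τ τ' => (hf y τ τ').1
  · rw [← Com.inline_call c] at h
    exact h.inline_mono fun y τ τ' => (hf y τ τ').2

theorem BigSteps.map_mono_s3 {ψ : Z → Com Z} {χ : W → Com W} {f : Y → Com Z} {g : Y → Com W}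
    (hfg : ∀ y τ τ', BigStep ψ (f y) τ τ' → BigStep χ (g y) τ τ') {ys : List Y}
    {σs σs' : List Mem} (h : BigSteps ψ (ys.map f) σs σs') : BigSteps χ (ys.map g) σs σs' := by
  induction ys generalizing σs σs' with
  | nil => cases h; exact .nil
  | cons y ys ih =>
    cases h with
    | cons hy hys => exact .cons (hfg y _ _ hy) (ih hys)

end

section

variable {Y : Type} {ψ χ χ' : Y → Com Y} {σ σ' : Mem}

/-- The approximations `ψₖ` of the environment `ψ`: the body of `y` in `ψₖ` is `ψ y` with its calls
inlined to depth `k`, the calls remaining at that depth being replaced by an infinite loop. -/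
def unfolding (ψ : Y → Com Y) : ℕ → Y → Com Y
  | 0 => fun _ => .while .tt (fun _ => True) .skip
  | k + 1 => fun y => (ψ y).inline (unfolding ψ k)

theorem not_bigStep_unfolding_zero {y : Y} : ¬ BigStep χ (unfolding ψ 0 y) σ σ' :=
  fun h => Bool.false_ne_true h.eval_eq_false_of_while.symm

-- The bodies `unfolding ψ k y` are call-free, so the ambient environment is irrelevant to them.
theorem bigStep_unfolding_congr {k : ℕ} {y : Y} :
    BigStep χ (unfolding ψ k y) σ σ' ↔ BigStep χ' (unfolding ψ k y) σ σ' := by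
  induction k generalizing y σ σ' with
  | zero => exact iff_of_false not_bigStep_unfolding_zero not_bigStep_unfolding_zero
  | succ k ih =>
    exact ⟨.inline_mono fun _ _ _ => ih.1, .inline_mono fun _ _ _ => ih.2⟩

theorem bigStep_unfolding_succ_call {k : ℕ} {y : Y} :
    BigStep (unfolding ψ (k + 1)) (.call y) σ σ' ↔ BigStep (unfolding ψ k) (ψ y) σ σ' :=
  bigStep_call_iff.trans <| bigStep_inline_iff fun _ _ _ => bigStep_unfolding_congr

theorem BigStep.eventually_unfolding {c : Com Y} (h : BigStep ψ c σ σ') :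
    ∀ᶠ k in atTop, BigStep (unfolding ψ k) c σ σ' := by
  induction h with
  | skip => exact .of_forall fun _ => .skip _
  | assign => exact .of_forall fun _ => .assign _ _ _
  | store => exact .of_forall fun _ => .store _ _ _
  | assert => exact .of_forall fun _ => .assert _ _
  | seq _ _ ih₁ ih₂ => filter_upwards [ih₁, ih₂] with k using .seq
  | condTrue hb _ ih => filter_upwards [ih] with k using .condTrue hb
  | condFalse hb _ ih => filter_upwards [ih] with k using .condFalse hb
  | whileTrue hb _ _ ih₁ ih₂ => filter_upwards [ih₁, ih₂] with k using .whileTrue hb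
  | whileFalse hb => exact .of_forall fun _ => .whileFalse hb
  | call _ ih =>
    rw [← map_add_atTop_eq_nat 1, eventually_map]
    exact ih.mono fun _ => bigStep_unfolding_succ_call.2

theorem BigSteps.eventually_unfolding {cs : List (Com Y)} {σs σs' : List Mem}
    (h : BigSteps ψ cs σs σs') : ∀ᶠ k in atTop, BigSteps (unfolding ψ k) cs σs σs' := by
  induction h with
  | nil => exact .of_forall fun _ => .nil
  | cons h _ ih => filter_upwards [h.eventually_unfolding, ih] with k using .cons

theorem RHoare.of_unfolding {P : List Mem → Prop} {cs : List (Com Y)}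
    {Q : List Mem → List Mem → Prop} (h : ∀ k, RHoare (unfolding ψ k) P cs Q) :
    RHoare ψ P cs Q := by
  intro σs σs' hP hcs
  obtain ⟨k, hk⟩ := hcs.eventually_unfolding.exists
  exact h k σs σs' hP hk

theorem RContractValid.unfolding_zero {Φ : List Y → RContract} :
    RContractValid (unfolding ψ 0) Φ
  | [], hne => absurd rfl hne
  | _ :: _, _ => fun | _, _, _, .cons (.call h) _ => absurd h not_bigStep_unfolding_zero

theorem RHoare.map_call_unfolding_succ {k : ℕ} {ys : List Y} {P : List Mem → Prop}
    {Q : List Mem → List Mem → Prop} (h : RHoare (unfolding ψ k) P (ys.map ψ) Q) :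
    RHoare (unfolding ψ (k + 1)) P (ys.map Com.call) Q :=
  fun σs σs' hP hcalls =>
    h σs σs' hP <| hcalls.map_mono_s3 fun _ _ _ => bigStep_unfolding_succ_call.1

end

/-- Mutual recursion for relational contracts. -/
theorem recursive_rela_proc {Y : Type} (ψ : Y → Com Y) (Φ : List Y → RContract)
    (h : ∀ ψ' : Y → Com Y, RContractValid ψ' Φ →
      ∀ ys : List Y, ys ≠ [] → RHoare ψ' (Φ ys).1 (ys.map ψ) (Φ ys).2) :
    RContractValid ψ Φ := by
  have valid_unfolding (k : ℕ) : RContractValid (unfolding ψ k) Φ := by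
    induction k with
    | zero => exact .unfolding_zero
    | succ k ih => exact fun ys hys => (h _ ih ys hys).map_call_unfolding_succ
  exact fun ys hys => .of_unfolding fun k => valid_unfolding k ys hys
end

section
/- (Lemma 3: optimized procedure VC implies naive procedure VC.) For every procedure environment ψ and contract environment φ, if Tf(φ, ψ) holds, then Tfⁿ(φ, ψ) holds. -/
/-!
Both condition generators describe the same relation between the initial and the final state of a
command, the one in which calls obey their contracts and loops their invariants. The naive generator
says that every final state so related to the initial one satisfies `P`. The optimized generator
implies that its continuation holds of the proposition that the two states are related; for the
continuation `fun p => p → P σ'` this is the same condition.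
-/

/-- The modular semantics of commands, which trusts every annotation: an assertion acts as an
assumption, a call is any transition allowed by its contract, and a loop is any transition from a
state satisfying the invariant to one that satisfies the invariant and falsifies the guard. It is
the common meaning of `Tc` and `Tcn`; the conditional is encoded by two implications so as to be
literally the formula that `Tc` builds. -/
def ContractStep {Y : Type} (φ : Y → Contract) : Com Y → Mem → Mem → Prop
  | .skip, σ, σ' => σ = σ'
  | .assign i a, σ, σ' => σ' = σ.update i (a.eval σ)
  | .store i a, σ, σ' => σ' = σ.update (σ i) (a.eval σ)
  | .assert P', σ, σ' => P' σ ∧ σ = σ'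
  | .seq c0 c1, σ, σ' => ∃ σ'' : Mem, ContractStep φ c0 σ σ'' ∧ ContractStep φ c1 σ'' σ'
  | .cond b c0 c1, σ, σ' =>
      (b.eval σ = true → ContractStep φ c0 σ σ') ∧ (b.eval σ = false → ContractStep φ c1 σ σ')
  | .call y, σ, σ' => (φ y).1 σ ∧ (φ y).2 σ σ'
  | .while b I _, σ, σ' => I σ ∧ I σ' ∧ b.eval σ' = false

section

variable {Y : Type} {φ : Y → Contract} {c : Com Y} {σ σ' : Mem}

theorem tcn_iff_forall_contractStep {P : Mem → Prop} :
    Tcn c σ φ P ↔ ∀ σ', ContractStep φ c σ σ' → P σ' := by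
  induction c generalizing σ P with
  | seq c0 c1 ih0 ih1 =>
    simp only [Tcn, ContractStep, ih0, ih1]
    exact ⟨fun h σ' ⟨σ'', h0, h1⟩ => h σ'' h0 σ' h1, fun h σ'' h0 σ' h1 => h σ' ⟨σ'', h0, h1⟩⟩
  | cond b c0 c1 ih0 ih1 => cases hb : b.eval σ <;> simp [Tcn, ContractStep, ih0, ih1, hb]
  | _ => simp [Tcn, ContractStep]

theorem Tc.apply_contractStep {f : Prop → Prop} (h : Tc c σ σ' φ f) :
    f (ContractStep φ c σ σ') := by
  induction c generalizing σ σ' f with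
  | seq c0 c1 ih0 ih1 =>
    -- An intermediate state if there is one, and an arbitrary state otherwise.
    let σ'' : Mem := Classical.epsilon fun τ => ContractStep φ c0 σ τ ∧ ContractStep φ c1 τ σ'
    have split : ContractStep φ (.seq c0 c1) σ σ' =
        (ContractStep φ c0 σ σ'' ∧ ContractStep φ c1 σ'' σ') :=
      propext ⟨Classical.epsilon_spec, fun steps => ⟨σ'', steps⟩⟩
    exact split ▸ ih1 (ih0 (h σ''))
  | cond b c0 c1 ih0 ih1 => exact ih1 (ih0 h)
  | _ => exact h

theorem Tcn.of_forall_tc {P : Mem → Prop} (h : ∀ σ', Tc c σ σ' φ (fun p => p → P σ')) :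
    Tcn c σ φ P :=
  tcn_iff_forall_contractStep.2 fun σ' => (h σ').apply_contractStep

theorem Tcn.mono {P Q : Mem → Prop} (h : Tcn c σ φ P) (hPQ : ∀ σ', P σ' → Q σ') :
    Tcn c σ φ Q :=
  tcn_iff_forall_contractStep.2 fun σ' step => hPQ σ' (tcn_iff_forall_contractStep.1 h σ' step)

theorem Tan.of_ta : ∀ (c : Com Y) {σ : Mem}, Ta c σ φ → Tan c σ φ
  | .skip, _, h | .assign _ _, _, h | .store _ _, _, h | .assert _, _, h | .call _, _, h => h
  | .seq c0 c1, _, ⟨h0, h1⟩ => ⟨of_ta c0 h0, (Tcn.of_forall_tc h1).mono fun _ => of_ta c1⟩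
  | .cond _ c0 c1, _, ⟨h0, h1⟩ => ⟨fun hb => of_ta c0 (h0 hb), fun hb => of_ta c1 (h1 hb)⟩
  | .while _ _ c, _, ⟨hI, hbody, hpres⟩ =>
      ⟨hI, fun σ' hσ' hb =>
        ⟨of_ta c (hbody σ' hσ' hb), Tcn.of_forall_tc fun σ'' => hpres σ' σ'' hσ'⟩⟩

end

/-- Lemma 3: the optimized procedure VC implies the naive procedure VC. -/
theorem tf_opt_implies_naive {Y : Type} (ψ : Y → Com Y) (φ : Y → Contract)
    (h : Tf φ ψ) : Tfn φ ψ := fun y σ hpre =>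
  ⟨Tan.of_ta _ (h y σ σ hpre).1, Tcn.of_forall_tc fun σ' => (h y σ σ' hpre).2⟩
end
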